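/- arXiv:1902.03270 — 2 statements merged into one kernel-verified Lean document; each statement's English description precedes it below -/
import Mathlib

section
/- Let X be a locally connected topological space, A ⊆ X a subset, f : X → ℝ continuous, and x ∈ X. Assume the set Λ(x) = {λ ∈ ℝ : λ > f(x) and the connected component of x in {f < λ} is disjoint from A} is nonempty and bounded above, and put λ(x) = sup Λ(x). Then the connected component of x in {f < λ(x)} is itself disjoint from A. (First assertion of Proposition 2.5 of the paper: each well C(x) = C(λ(x),x) is contained in Ω, i.e. does not meet the boundary; proved via the union formula of Lemma 2.2.) -/
/-!
In a locally connected space, components commute with directed unions of open sets: if a point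
of the union lies in the closure of `⋃ i, C(U i, x)`, its own component in some `U i` is an open
neighbourhood, so it meets a component `C(U j, x)` and the two merge inside a common `U k`. Hence
`⋃ i, C(U i, x)` is clopen relative to `⋃ i, U i`. The sublevel set `{f < λ(x)}` is the union of
the nested open sets `{f < l}` with `l ∈ Λ(x)`, so the well of `x` at level `λ(x)` is a union of
wells that avoid `A`.
-/

open Set

section

variable {X : Type*} [TopologicalSpace X]

theorem connectedComponentIn_eq_of_inter_nonempty {S : Set X} {x y : X}
    (h : (connectedComponentIn S x ∩ connectedComponentIn S y).Nonempty) :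
    connectedComponentIn S x = connectedComponentIn S y :=
  let ⟨_, hx, hy⟩ := h
  (connectedComponentIn_eq hx).trans (connectedComponentIn_eq hy).symm

variable [LocallyConnectedSpace X]

theorem closure_iUnion_connectedComponentIn_inter_subset {ι : Sort*} {U : ι → Set X}
    (hdir : Directed (· ⊆ ·) U) (hU : ∀ i, IsOpen (U i)) (x : X) :
    closure (⋃ i, connectedComponentIn (U i) x) ∩ ⋃ i, U i ⊆
      ⋃ i, connectedComponentIn (U i) x := by
  rintro y ⟨hy, hyU⟩
  obtain ⟨i, hyi⟩ := mem_iUnion.mp hyU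
  obtain ⟨z, hzy, hzx⟩ :=
    mem_closure_iff.mp hy _ (hU i).connectedComponentIn (mem_connectedComponentIn hyi)
  obtain ⟨j, hzx⟩ := mem_iUnion.mp hzx
  obtain ⟨k, hik, hjk⟩ := hdir i j
  have hmerge : connectedComponentIn (U k) x = connectedComponentIn (U k) y :=
    connectedComponentIn_eq_of_inter_nonempty
      ⟨z, connectedComponentIn_mono x hjk hzx, connectedComponentIn_mono y hik hzy⟩
  exact mem_iUnion_of_mem k (hmerge ▸ mem_connectedComponentIn (hik hyi))

theorem connectedComponentIn_iUnion_of_directed {ι : Sort*} {U : ι → Set X}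
    (hdir : Directed (· ⊆ ·) U) (hU : ∀ i, IsOpen (U i)) (x : X) :
    connectedComponentIn (⋃ i, U i) x = ⋃ i, connectedComponentIn (U i) x := by
  refine Subset.antisymm ?_
    (iUnion_subset fun i => connectedComponentIn_mono x (subset_iUnion U i))
  by_cases hx : x ∈ ⋃ i, U i
  · obtain ⟨i, hxi⟩ := mem_iUnion.mp hx
    refine isPreconnected_connectedComponentIn.subset_of_closure_inter_subset
      (isOpen_iUnion fun i => (hU i).connectedComponentIn)
      ⟨x, mem_connectedComponentIn hx, mem_iUnion_of_mem i (mem_connectedComponentIn hxi)⟩ ?_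
    exact (inter_subset_inter_right _ (connectedComponentIn_subset _ x)).trans
      (closure_iUnion_connectedComponentIn_inter_subset hdir hU x)
  · exact (connectedComponentIn_eq_empty hx).trans_subset (empty_subset _)

variable {α : Type*} [LinearOrder α]

theorem connectedComponentIn_preimage_Iio_of_isLUB {f : X → α} (hf : UpperSemicontinuous f)
    {L : Set α} {m : α} (hm : IsLUB L m) (x : X) :
    connectedComponentIn (f ⁻¹' Iio m) x = ⋃ l ∈ L, connectedComponentIn (f ⁻¹' Iio l) x := by
  have hdir : Directed (· ⊆ ·) fun l : L => f ⁻¹' Iio (l : α) :=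
    Monotone.directed_le fun _ _ hkl => preimage_mono (Iio_subset_Iio hkl)
  rw [← hm.biUnion_Iio_eq, preimage_iUnion₂, biUnion_eq_iUnion, biUnion_eq_iUnion]
  exact connectedComponentIn_iUnion_of_directed hdir (fun l => hf.isOpen_preimage l) x

theorem stmt4_general {f : X → α} (hf : UpperSemicontinuous f) {A : Set X} {x : X}
    {L : Set α} {m : α} (hm : IsLUB L m)
    (hL : ∀ l ∈ L, Disjoint (connectedComponentIn (f ⁻¹' Iio l) x) A) :
    Disjoint (connectedComponentIn (f ⁻¹' Iio m) x) A := by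
  rw [connectedComponentIn_preimage_Iio_of_isLUB hf hm]
  exact disjoint_iUnion₂_left.mpr hL

end

/-- First assertion of Proposition 2.5: the open well of `x` at the critical level
`λ(x) = sup Λ(x)` is still disjoint from the boundary set `A`. -/
theorem stmt4 {X : Type*} [TopologicalSpace X] [LocallyConnectedSpace X]
    (A : Set X) (f : X → ℝ) (hf : Continuous f) (x : X)
    (Λ : Set ℝ)
    (hΛ : Λ = {l : ℝ | f x < l ∧ connectedComponentIn {y | f y < l} x ∩ A = ∅})
    (hne : Λ.Nonempty) (hbdd : BddAbove Λ) :
    connectedComponentIn {y | f y < sSup Λ} x ∩ A = ∅ :=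
  (stmt4_general hf.upperSemicontinuous (isLUB_csSup hne hbdd) fun _ hl =>
    disjoint_iff_inter_eq_empty.mpr (hΛ.subset hl).2).inter_eq
end

section
/- Let X be a compact Hausdorff topological space, A ⊆ X a closed subset, f : X → ℝ continuous, and x ∈ X. Assume the set Λ(x) = {λ ∈ ℝ : λ > f(x) and the connected component of x in {f < λ} is disjoint from A} is nonempty and bounded above, and put λ(x) = sup Λ(x). Then the connected component of x in the closed sublevel set {f ≤ λ(x)} has nonempty intersection with A. (This is the key compactness argument in Step 5 of the proof of Proposition 2.5 and in Lemma 2.6 of the paper: the closed well at the critical level λ(x) reaches the boundary; it is proved by combining the intersection formula of Lemma 2.2 with a decreasing intersection of nonempty compact sets.) -/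
/-!
Above the critical level `s = sup Λ(x)` every closed well of `x` meets `A`. As the level decreases
to `s`, the closed wells form a decreasing family of compact sets, and so do their traces on `A`;
hence some point of `A` lies in all of them. The intersection of the wells is contained in
`{f ≤ s}` and is again connected, because a decreasing intersection of compact connected sets is;
it is therefore the closed well of `x` at level `s`.
-/

open Set

section DirectedIntersection

variable {X ι : Type*} [TopologicalSpace X] {F : Set X} {K : ι → Set X}

theorem isClosed_connectedComponentIn (hF : IsClosed F) (x : X) :
    IsClosed (connectedComponentIn F x) := by
  by_cases hx : x ∈ F
  · exact isClosed_of_closure_subset <|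
      isPreconnected_connectedComponentIn.closure.subset_connectedComponentIn
        (subset_closure (mem_connectedComponentIn hx))
        (closure_minimal (connectedComponentIn_subset F x) hF)
  · simp only [connectedComponentIn_eq_empty hx, isClosed_empty]

theorem directed_connectedComponentIn (hK : Directed (· ⊇ ·) K) (x : X) :
    Directed (· ⊇ ·) fun i ↦ connectedComponentIn (K i) x :=
  hK.mono_comp (· ⊇ ·) (g := (connectedComponentIn · x)) fun _ _ h ↦ connectedComponentIn_mono x h

variable [Nonempty ι]

theorem isPreconnected_iInter_of_directed [R1Space X] (hK : Directed (· ⊇ ·) K)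
    (hcomp : ∀ i, IsCompact (K i)) (hclosed : ∀ i, IsClosed (K i))
    (hconn : ∀ i, IsPreconnected (K i)) : IsPreconnected (⋂ i, K i) := by
  have hclosed_iInter : IsClosed (⋂ i, K i) := isClosed_iInter hclosed
  have hcomp_iInter : IsCompact (⋂ i, K i) :=
    (hcomp (Classical.arbitrary ι)).of_isClosed_subset hclosed_iInter (iInter_subset _ _)
  rw [isPreconnected_iff_subset_of_fully_disjoint_closed hclosed_iInter]
  intro u v hu hv huv hdisj
  obtain ⟨U, V, hU, hV, huU, hvV, hUV⟩ : SeparatedNhds ((⋂ i, K i) ∩ u) ((⋂ i, K i) ∩ v) :=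
    .of_isCompact_isCompact_isClosed (hcomp_iInter.inter_right hu) (hcomp_iInter.inter_right hv)
      (hclosed_iInter.inter hv) (hdisj.mono inter_subset_right inter_subset_right)
  have hcover : ⋂ i, K i ⊆ U ∪ V := fun y hy ↦
    (huv hy).imp (fun h ↦ huU ⟨hy, h⟩) (fun h ↦ hvV ⟨hy, h⟩)
  obtain ⟨i, hi⟩ : ∃ i, K i ⊆ U ∪ V :=
    exists_subset_nhds_of_isCompact' hK hcomp hclosed fun y hy ↦
      (hU.union hV).mem_nhds (hcover hy)
  refine ((hconn i).subset_or_subset hU hV hUV hi).imp (fun hiU y hy ↦ ?_) (fun hiV y hy ↦ ?_)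
  · exact (huv hy).resolve_right fun hyv ↦
      disjoint_left.1 hUV (hiU (mem_iInter.1 hy i)) (hvV ⟨hy, hyv⟩)
  · exact (huv hy).resolve_left fun hyu ↦
      disjoint_left.1 hUV (huU ⟨hy, hyu⟩) (hiV (mem_iInter.1 hy i))

theorem connectedComponentIn_iInter_of_directed [R1Space X] (hK : Directed (· ⊇ ·) K)
    (hcomp : ∀ i, IsCompact (K i)) (hclosed : ∀ i, IsClosed (K i)) (x : X) :
    connectedComponentIn (⋂ i, K i) x = ⋂ i, connectedComponentIn (K i) x := by
  refine Subset.antisymm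
    (subset_iInter fun i ↦ connectedComponentIn_mono x (iInter_subset K i)) fun y hy ↦ ?_
  have hx (i : ι) : x ∈ K i := connectedComponentIn_nonempty_iff.1 ⟨y, mem_iInter.1 hy i⟩
  have hclosed' (i : ι) := isClosed_connectedComponentIn (hclosed i) x
  have hconn : IsPreconnected (⋂ i, connectedComponentIn (K i) x) :=
    isPreconnected_iInter_of_directed (directed_connectedComponentIn hK x)
      (fun i ↦ (hcomp i).of_isClosed_subset (hclosed' i) (connectedComponentIn_subset _ _))
      hclosed' fun _ ↦ isPreconnected_connectedComponentIn
  exact hconn.subset_connectedComponentIn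
    (mem_iInter.2 fun i ↦ mem_connectedComponentIn (hx i))
    (iInter_mono fun i ↦ connectedComponentIn_subset (K i) x) hy

theorem connectedComponentIn_iInter_inter_nonempty [R1Space X] (hK : Directed (· ⊇ ·) K)
    (hcomp : ∀ i, IsCompact (K i)) (hclosed : ∀ i, IsClosed (K i)) {A : Set X} (hA : IsClosed A)
    {x : X} (hmeet : ∀ i, (connectedComponentIn (K i) x ∩ A).Nonempty) :
    (connectedComponentIn (⋂ i, K i) x ∩ A).Nonempty := by
  have hclosed' (i : ι) : IsClosed (connectedComponentIn (K i) x ∩ A) :=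
    (isClosed_connectedComponentIn (hclosed i) x).inter hA
  rw [connectedComponentIn_iInter_of_directed hK hcomp hclosed, iInter_inter]
  exact IsCompact.nonempty_iInter_of_directed_nonempty_isCompact_isClosed _
    ((directed_connectedComponentIn hK x).mono_comp (· ⊇ ·) (g := (· ∩ A))
      fun _ _ h ↦ inter_subset_inter_left A h)
    hmeet
    (fun i ↦ (hcomp i).of_isClosed_subset (hclosed' i)
      (inter_subset_left.trans (connectedComponentIn_subset _ _)))
    hclosed'

end DirectedIntersection

section Sublevel

variable {X α : Type*} [LinearOrder α] [DenselyOrdered α] {f : X → α} {s c : α}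

theorem sublevel_eq_iInter_Ioc (f : X → α) (hsc : s < c) :
    {y | f y ≤ s} = ⋂ m : Ioc s c, {y | f y ≤ m} := by
  ext y
  simp only [mem_ofPred_eq, mem_iInter]
  refine ⟨fun hy m ↦ hy.trans m.2.1.le, fun hy ↦ le_of_forall_gt_imp_ge_of_dense fun m hm ↦ ?_⟩
  exact (hy ⟨min m c, lt_min hm hsc, min_le_right m c⟩).trans (min_le_left m c)

variable [TopologicalSpace X] [R1Space X] {A : Set X} {x : X}

theorem connectedComponentIn_sublevel_inter_nonempty (hA : IsClosed A)
    (hf : LowerSemicontinuous f) (hsc : s < c) (hc : IsCompact {y | f y ≤ c})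
    (hmeet : ∀ m ∈ Ioc s c, (connectedComponentIn {y | f y ≤ m} x ∩ A).Nonempty) :
    (connectedComponentIn {y | f y ≤ s} x ∩ A).Nonempty := by
  have : Nonempty (Ioc s c) := ⟨⟨c, hsc, le_rfl⟩⟩
  have hmono : Monotone fun m : Ioc s c ↦ {y | f y ≤ m} := fun _ _ hab _ hy ↦ le_trans hy hab
  have hclosed (m : Ioc s c) : IsClosed {y | f y ≤ m} := hf.isClosed_preimage m
  rw [sublevel_eq_iInter_Ioc f hsc]
  exact connectedComponentIn_iInter_inter_nonempty (directed_of_isDirected_ge hmono)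
    (fun m ↦ hc.of_isClosed_subset (hclosed m) fun _ hy ↦ le_trans hy m.2.2) hclosed hA
    fun m ↦ hmeet m m.2

theorem stmt6_general (hA : IsClosed A) (hf : LowerSemicontinuous f) {Λ : Set α}
    (hΛ : Λ = {l | f x < l ∧ connectedComponentIn {y | f y < l} x ∩ A = ∅})
    (hne : Λ.Nonempty) (hs : IsLUB Λ s) (hsc : s < c) (hc : IsCompact {y | f y ≤ c}) :
    (connectedComponentIn {y | f y ≤ s} x ∩ A).Nonempty := by
  subst hΛ
  obtain ⟨l, hl⟩ := hne
  have hxs : f x < s := hl.1.trans_le (hs.1 hl)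
  refine connectedComponentIn_sublevel_inter_nonempty hA hf hsc hc fun m hm ↦ ?_
  have hmeet_lt : (connectedComponentIn {y | f y < m} x ∩ A).Nonempty := by
    by_contra hempty
    exact hm.1.not_ge (hs.1 ⟨hxs.trans hm.1, not_nonempty_iff_eq_empty.1 hempty⟩)
  exact hmeet_lt.mono (inter_subset_inter_left A (connectedComponentIn_mono x fun _ ↦ le_of_lt))

end Sublevel

/-- Key compactness argument of Step 5 of the proof of Proposition 2.5 and Lemma 2.6:
the closed well of `x` at the critical level `λ(x) = sup Λ(x)` reaches the boundary `A`. -/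
theorem stmt6 {X : Type*} [TopologicalSpace X] [CompactSpace X] [T2Space X]
    (A : Set X) (hA : IsClosed A) (f : X → ℝ) (hf : Continuous f) (x : X)
    (Λ : Set ℝ)
    (hΛ : Λ = {l : ℝ | f x < l ∧ connectedComponentIn {y | f y < l} x ∩ A = ∅})
    (hne : Λ.Nonempty) (hbdd : BddAbove Λ) :
    (connectedComponentIn {y | f y ≤ sSup Λ} x ∩ A).Nonempty :=
  stmt6_general hA hf.lowerSemicontinuous hΛ hne (isLUB_csSup hne hbdd) (lt_add_one _)
    (isClosed_le hf continuous_const).isCompact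
end
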